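/- arXiv:math/0110021 — 3 statements merged into one kernel-verified Lean document; each statement's English description precedes it below -/
import Mathlib

section
/- Let Ω ⊆ ℝ² be open, X : Ω → ℝ³ a smooth immersion with first fundamental form coefficients g₁₁ = ⟨X_u, X_u⟩, g₁₂ = ⟨X_u, X_v⟩, g₂₂ = ⟨X_v, X_v⟩ (subscripts u, v denoting partial derivatives) and unit normal N = (X_u × X_v)/‖X_u × X_v‖. Let R : Ω → ℝ be smooth, ν : Ω → ℝ³ smooth with ‖ν‖ = 1 everywhere, and set ξ = X − R·ν. If ⟨ν, ξ_u⟩ = 0 and ⟨ν, ξ_v⟩ = 0 at every point of Ω, then, writing [A_{ij}] for the inverse of the matrix [g_{ij}], the decomposition ν = a·X_u + b·X_v + c·N satisfies a = A₁₁R_u + A₁₂R_v, b = A₂₁R_u + A₂₂R_v, and c² = 1 − Δ₁R, where Δ₁R = R_u²A₁₁ + 2R_uR_vA₁₂ + R_v²A₂₂. Consequently ξ = X − R(Δ(X,R) ± √(1−Δ₁R)·N), where Δ(X,R) = (R_uA₁₁ + R_vA₁₂)X_u + (R_uA₂₁ + R_vA₂₂)X_v. -/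
noncomputable section

/-- Euclidean dot product on ℝ³ (as `Fin 3 → ℝ`). -/
def dot3 (a b : Fin 3 → ℝ) : ℝ := a 0 * b 0 + a 1 * b 1 + a 2 * b 2

/-- Euclidean norm on ℝ³. -/
def norm3 (a : Fin 3 → ℝ) : ℝ := Real.sqrt (dot3 a a)

/-- Cross product on ℝ³. -/
def cross3 (a b : Fin 3 → ℝ) : Fin 3 → ℝ :=
  ![a 1 * b 2 - a 2 * b 1, a 2 * b 0 - a 0 * b 2, a 0 * b 1 - a 1 * b 0]

lemma dot3_deriv_zero (Ω : Set (ℝ × ℝ)) (hΩ : IsOpen Ω) (ν : ℝ × ℝ → Fin 3 → ℝ)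
    (hunit : ∀ p ∈ Ω, norm3 (ν p) = 1) (p : ℝ × ℝ) (hp : p ∈ Ω)
    (hd : DifferentiableAt ℝ ν p) (w : ℝ × ℝ) : dot3 (ν p) (fderiv ℝ ν p w) = 0 := by
  have h := fun i => (hasFDerivAt_pi'.1 hd.hasFDerivAt) i
  have h1 := ((h 0).mul (h 0)).add ((h 1).mul (h 1)) |>.add ((h 2).mul (h 2))
  have h2 : HasFDerivAt (fun _ : ℝ × ℝ => (1 : ℝ)) (0 : (ℝ × ℝ) →L[ℝ] ℝ) p :=
    hasFDerivAt_const _ _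
  have h3 := h2.congr_of_eventuallyEq (f₁ := fun q => dot3 (ν q) (ν q)) (by
    filter_upwards [hΩ.mem_nhds hp] with q hq
    have := hunit q hq
    rw [norm3, Real.sqrt_eq_one] at this
    exact this)
  have h4 := congrArg (fun L : (ℝ × ℝ) →L[ℝ] ℝ => L w) (HasFDerivAt.unique h1 h3)
  simp at h4
  simp only [dot3]
  linarith

lemma dot3_nu (Ω : Set (ℝ × ℝ)) (hΩ : IsOpen Ω) (X ν ξ : ℝ × ℝ → Fin 3 → ℝ) (R : ℝ × ℝ → ℝ)
    (hunit : ∀ p ∈ Ω, norm3 (ν p) = 1) (hξ : ∀ p, ξ p = X p - R p • ν p)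
    (p : ℝ × ℝ) (hp : p ∈ Ω) (hX : DifferentiableAt ℝ X p) (hR : DifferentiableAt ℝ R p)
    (hd : DifferentiableAt ℝ ν p) (w : ℝ × ℝ) (he : dot3 (ν p) (fderiv ℝ ξ p w) = 0) :
    dot3 (ν p) (fderiv ℝ X p w) = fderiv ℝ R p w := by
  have h0 := dot3_deriv_zero Ω hΩ ν hunit p hp hd w
  have h1 := hunit p hp
  rw [norm3, Real.sqrt_eq_one] at h1
  have h2 : HasFDerivAt ξ _ p :=
    (hX.hasFDerivAt.sub (hR.hasFDerivAt.smul hd.hasFDerivAt)).congr_of_eventuallyEq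
      (Filter.Eventually.of_forall hξ)
  rw [h2.fderiv] at he
  simp [dot3] at he h0 h1 ⊢
  linear_combination he + R p * h0 + (fderiv ℝ R p w) * h1

lemma alg (x y n : Fin 3 → ℝ) (r s : ℝ) (A : Matrix (Fin 2) (Fin 2) ℝ)
    (hA : A * !![dot3 x x, dot3 x y; dot3 x y, dot3 y y] = 1)
    (hn : dot3 n n = 1) (hx : dot3 n x = r) (hy : dot3 n y = s) :
      let N := (norm3 (cross3 x y))⁻¹ • cross3 x y
      let Δ₁R := r ^ 2 * A 0 0 + 2 * r * s * A 0 1 + s ^ 2 * A 1 1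
      let ΔXR := (r * A 0 0 + s * A 0 1) • x + (r * A 1 0 + s * A 1 1) • y
      (∀ a b c : ℝ, n = a • x + b • y + c • N →
        a = A 0 0 * r + A 0 1 * s ∧
        b = A 1 0 * r + A 1 1 * s ∧
        c ^ 2 = 1 - Δ₁R) ∧
      (n = ΔXR + Real.sqrt (1 - Δ₁R) • N ∨
       n = ΔXR - Real.sqrt (1 - Δ₁R) • N) := by
  intro N Δ₁R ΔXR
  have e00 := congrFun (congrFun hA 0) 0
  have e01 := congrFun (congrFun hA 0) 1
  have e10 := congrFun (congrFun hA 1) 0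
  have e11 := congrFun (congrFun hA 1) 1
  simp [Matrix.mul_apply, Fin.sum_univ_two] at e00 e01 e10 e11
  obtain ⟨g11, hg11⟩ : ∃ g, g = dot3 x x := ⟨_, rfl⟩
  obtain ⟨g12, hg12⟩ : ∃ g, g = dot3 x y := ⟨_, rfl⟩
  obtain ⟨g22, hg22⟩ : ∃ g, g = dot3 y y := ⟨_, rfl⟩
  rw [← hg11, ← hg12] at e00 e10
  rw [← hg12, ← hg22] at e01 e11
  obtain ⟨D, hD⟩ : ∃ D, D = g11 * g22 - g12 ^ 2 := ⟨_, rfl⟩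
  have d : (A 0 0 * A 1 1 - A 0 1 * A 1 0) * D = 1 := by
    rw [hD]; linear_combination (A 1 0 * g12 + A 1 1 * g22) * e00 + e11 - (A 1 0 * g11 + A 1 1 * g12) * e01
  have hD0 : D ≠ 0 := by rintro h; simp [h] at d
  have a00 : A 0 0 * D = g22 := by rw [hD]; linear_combination g22 * e00 - g12 * e01
  have a01 : A 0 1 * D = -g12 := by rw [hD]; linear_combination g11 * e01 - g12 * e00
  have a10 : A 1 0 * D = -g12 := by rw [hD]; linear_combination g22 * e10 - g12 * e11
  have a11 : A 1 1 * D = g11 := by rw [hD]; linear_combination g11 * e11 - g12 * e10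
  have sym : A 0 1 = A 1 0 := mul_right_cancel₀ hD0 (a01.trans a10.symm)
  have hW : dot3 (cross3 x y) (cross3 x y) = D := by
    rw [hD, hg11, hg12, hg22]; simp [dot3, cross3]; ring
  have hDpos : 0 ≤ D := by rw [← hW]; simp only [dot3]; nlinarith [mul_self_nonneg (cross3 x y 0), mul_self_nonneg (cross3 x y 1), mul_self_nonneg (cross3 x y 2)]
  obtain ⟨k, hk⟩ : ∃ k, k = (norm3 (cross3 x y))⁻¹ := ⟨_, rfl⟩
  have hkD : k ^ 2 * D = 1 := by
    rw [hk, norm3, hW, inv_pow, Real.sq_sqrt hDpos, inv_mul_cancel₀ hD0]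
  have hN : N = k • cross3 x y := by rw [hk]
  have Nx : dot3 N x = 0 := by rw [hN]; simp [dot3, cross3]; ring
  have Ny : dot3 N y = 0 := by rw [hN]; simp [dot3, cross3]; ring
  have NN : dot3 N N = 1 := by
    rw [← hkD, ← hW, hN]; simp [dot3]; ring
  have first : ∀ a b c : ℝ, n = a • x + b • y + c • N →
        a = A 0 0 * r + A 0 1 * s ∧ b = A 1 0 * r + A 1 1 * s ∧ c ^ 2 = 1 - Δ₁R := by
    intro a b c h
    have hr : r = a * g11 + b * g12 := by
      rw [← hx, h, hg11, hg12]; simp only [dot3, Pi.add_apply, Pi.smul_apply, smul_eq_mul] at Nx ⊢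
      linear_combination c * Nx
    have hs : s = a * g12 + b * g22 := by
      rw [← hy, h, hg12, hg22]; simp only [dot3, Pi.add_apply, Pi.smul_apply, smul_eq_mul] at Ny ⊢
      linear_combination c * Ny
    have hnn : a ^ 2 * g11 + 2 * a * b * g12 + b ^ 2 * g22 + c ^ 2 = 1 := by
      rw [← hn, h, hg11, hg12, hg22]
      simp only [dot3, Pi.add_apply, Pi.smul_apply, smul_eq_mul] at Nx Ny NN ⊢
      linear_combination (-2 * a * c) * Nx - 2 * b * c * Ny - c ^ 2 * NN
    have ha : a = A 0 0 * r + A 0 1 * s := by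
      rw [hr, hs]; linear_combination (-a) * e00 - b * e01
    have hb : b = A 1 0 * r + A 1 1 * s := by
      rw [hr, hs]; linear_combination (-a) * e10 - b * e11
    refine ⟨ha, hb, ?_⟩
    have : Δ₁R = a * r + b * s := by
      rw [ha, hb, ← sym]; simp only [Δ₁R]; ring
    rw [this, hr, hs]; linear_combination hnn
  refine ⟨first, ?_⟩
  have ex : n = (r * A 0 0 + s * A 0 1) • x + (r * A 1 0 + s * A 1 1) • y + (dot3 n N) • N := by
    have key : ∀ i, D * n i = (r * g22 - s * g12) * x i + (s * g11 - r * g12) * y i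
        + dot3 n (cross3 x y) * cross3 x y i := by
      intro i
      rw [hD, hg11, hg12, hg22, ← hx, ← hy]
      fin_cases i <;> simp [dot3, cross3] <;> ring
    have hnN : dot3 n N = k * dot3 n (cross3 x y) := by rw [hN]; simp [dot3]; ring
    funext i
    apply mul_left_cancel₀ hD0
    rw [key i, hnN, hN, ← a00, ← a11]
    simp only [Pi.add_apply, Pi.smul_apply, smul_eq_mul]
    linear_combination (-s * x i) * a01 - r * y i * a10 - dot3 n (cross3 x y) * cross3 x y i * hkD
  obtain ⟨-, -, hc⟩ := first _ _ _ ex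
  rw [← hc, Real.sqrt_sq_eq_abs]
  rcases abs_choice (dot3 n N) with h | h <;> rw [h]
  · left; exact ex
  · right; rw [neg_smul, sub_neg_eq_add]; exact ex

/-- For an envelope `ξ = X − R·ν` of a congruence of spheres `[X, R]`, the decomposition
`ν = a·X_u + b·X_v + c·N` has `a = A₁₁R_u + A₁₂R_v`, `b = A₂₁R_u + A₂₂R_v`,
`c² = 1 − Δ₁R`, and consequently `ξ = X − R(Δ(X,R) ± √(1−Δ₁R)·N)`. -/
theorem statement0 (Ω : Set (ℝ × ℝ)) (hΩ : IsOpen Ω)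
    (X ν : ℝ × ℝ → Fin 3 → ℝ) (R : ℝ × ℝ → ℝ)
    (hX : ContDiffOn ℝ (⊤ : ℕ∞) X Ω) (hR : ContDiffOn ℝ (⊤ : ℕ∞) R Ω) (hν : ContDiffOn ℝ (⊤ : ℕ∞) ν Ω)
    (himm : ∀ p ∈ Ω, LinearIndependent ℝ ![fderiv ℝ X p (1, 0), fderiv ℝ X p (0, 1)])
    (hunit : ∀ p ∈ Ω, norm3 (ν p) = 1)
    (ξ : ℝ × ℝ → Fin 3 → ℝ)
    (hξ : ∀ p, ξ p = X p - R p • ν p)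
    (henv : ∀ p ∈ Ω, dot3 (ν p) (fderiv ℝ ξ p (1, 0)) = 0 ∧
                     dot3 (ν p) (fderiv ℝ ξ p (0, 1)) = 0)
    -- `A` is the pointwise inverse of the first fundamental form matrix `[g_{ij}]`
    (A : ℝ × ℝ → Matrix (Fin 2) (Fin 2) ℝ)
    (hA : ∀ p ∈ Ω,
      A p * !![dot3 (fderiv ℝ X p (1, 0)) (fderiv ℝ X p (1, 0)),
               dot3 (fderiv ℝ X p (1, 0)) (fderiv ℝ X p (0, 1));
               dot3 (fderiv ℝ X p (1, 0)) (fderiv ℝ X p (0, 1)),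
               dot3 (fderiv ℝ X p (0, 1)) (fderiv ℝ X p (0, 1))] = 1) :
    ∀ p ∈ Ω,
      let Xu := fderiv ℝ X p (1, 0)
      let Xv := fderiv ℝ X p (0, 1)
      let N := (norm3 (cross3 Xu Xv))⁻¹ • cross3 Xu Xv
      let Ru := fderiv ℝ R p (1, 0)
      let Rv := fderiv ℝ R p (0, 1)
      let Δ₁R := Ru ^ 2 * A p 0 0 + 2 * Ru * Rv * A p 0 1 + Rv ^ 2 * A p 1 1
      let ΔXR := (Ru * A p 0 0 + Rv * A p 0 1) • Xu + (Ru * A p 1 0 + Rv * A p 1 1) • Xv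
      (∀ a b c : ℝ, ν p = a • Xu + b • Xv + c • N →
        a = A p 0 0 * Ru + A p 0 1 * Rv ∧
        b = A p 1 0 * Ru + A p 1 1 * Rv ∧
        c ^ 2 = 1 - Δ₁R) ∧
      (ξ p = X p - R p • (ΔXR + Real.sqrt (1 - Δ₁R) • N) ∨
       ξ p = X p - R p • (ΔXR - Real.sqrt (1 - Δ₁R) • N)) := by
  intro p hp Xu Xv N Ru Rv Δ₁R ΔXR
  have dX := (hX.contDiffAt (hΩ.mem_nhds hp)).differentiableAt (by simp)
  have dR := (hR.contDiffAt (hΩ.mem_nhds hp)).differentiableAt (by simp)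
  have dν := (hν.contDiffAt (hΩ.mem_nhds hp)).differentiableAt (by simp)
  have h1 := hunit p hp
  rw [norm3, Real.sqrt_eq_one] at h1
  have hu := dot3_nu Ω hΩ X ν ξ R hunit hξ p hp dX dR dν (1, 0) (henv p hp).1
  have hv := dot3_nu Ω hΩ X ν ξ R hunit hξ p hp dX dR dν (0, 1) (henv p hp).2
  obtain ⟨H1, H2⟩ := alg Xu Xv (ν p) Ru Rv (A p) (hA p hp) h1 hu hv
  refine ⟨H1, ?_⟩
  rw [hξ p]
  rcases H2 with h | h
  · left; exact congrArg (fun z => X p - R p • z) h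
  · right; exact congrArg (fun z => X p - R p • z) h
end
end

section
/- (Beltrami) Let Ω ⊆ ℝ² be open and let X, X̃ : Ω → ℝ³ be smooth immersions with pointwise equal first fundamental forms: ⟨X_u,X_u⟩ = ⟨X̃_u,X̃_u⟩, ⟨X_u,X_v⟩ = ⟨X̃_u,X̃_v⟩, ⟨X_v,X_v⟩ = ⟨X̃_v,X̃_v⟩ on Ω. Let R : Ω → ℝ be smooth and let ν, ν̃ : Ω → ℝ³ be smooth unit vector fields such that ξ = X − R·ν and ξ̃ = X̃ − R·ν̃ satisfy the envelope conditions ⟨ν, ξ_u⟩ = ⟨ν, ξ_v⟩ = 0 and ⟨ν̃, ξ̃_u⟩ = ⟨ν̃, ξ̃_v⟩ = 0 on Ω, with N = (X_u × X_v)/‖X_u × X_v‖, Ñ = (X̃_u × X̃_v)/‖X̃_u × X̃_v‖, and suppose ⟨ν, N⟩ and ⟨ν̃, Ñ⟩ are both nonnegative on Ω. Then at every point of Ω the angle cosines coincide: ⟨ν, X_u⟩/‖X_u‖ = ⟨ν̃, X̃_u⟩/‖X̃_u‖, ⟨ν, X_v⟩/‖X_v‖ = ⟨ν̃, X̃_v⟩/‖X̃_v‖,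 and ⟨ν, N⟩ = ⟨ν̃, Ñ⟩. -/
noncomputable section

theorem key_tangent {Ω : Set (ℝ × ℝ)} (hΩ : IsOpen Ω)
    {X ν ξ : ℝ × ℝ → Fin 3 → ℝ} {R : ℝ × ℝ → ℝ}
    (hX : ContDiffOn ℝ (⊤ : ℕ∞) X Ω) (hR : ContDiffOn ℝ (⊤ : ℕ∞) R Ω)
    (hν : ContDiffOn ℝ (⊤ : ℕ∞) ν Ω)
    (hunit : ∀ p ∈ Ω, norm3 (ν p) = 1)
    (hξ : ∀ p, ξ p = X p - R p • ν p) {p : ℝ × ℝ} (hp : p ∈ Ω) (w : ℝ × ℝ)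
    (henv : dot3 (ν p) (fderiv ℝ ξ p w) = 0) :
    dot3 (ν p) (fderiv ℝ X p w) = fderiv ℝ R p w := by
  have hn : Ω ∈ nhds p := hΩ.mem_nhds hp
  have dX : HasFDerivAt X (fderiv ℝ X p) p :=
    ((hX.contDiffAt hn).differentiableAt (by simp)).hasFDerivAt
  have dR : HasFDerivAt R (fderiv ℝ R p) p :=
    ((hR.contDiffAt hn).differentiableAt (by simp)).hasFDerivAt
  have dν : HasFDerivAt ν (fderiv ℝ ν p) p :=
    ((hν.contDiffAt hn).differentiableAt (by simp)).hasFDerivAt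
  have hsq : ∀ q ∈ Ω, ν q 0 * ν q 0 + ν q 1 * ν q 1 + ν q 2 * ν q 2 = 1 := by
    intro q hq
    have h := hunit q hq
    unfold norm3 at h
    rw [Real.sqrt_eq_one] at h
    exact h
  have dξ : fderiv ℝ ξ p w
      = fderiv ℝ X p w - (R p • fderiv ℝ ν p w + fderiv ℝ R p w • ν p) := by
    have e : ξ = X - R • ν := funext hξ
    have h := (dX.sub (dR.smul dν)).fderiv
    rw [e, h]
    simp
  have dc : ∀ i, HasFDerivAt (fun q => ν q i)
      ((ContinuousLinearMap.proj i).comp (fderiv ℝ ν p)) p := fun i => (hasFDerivAt_pi'.1 dν) i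
  have dsum := (((dc 0).mul (dc 0)).add ((dc 1).mul (dc 1))).add ((dc 2).mul (dc 2))
  have dconst : HasFDerivAt (fun _ : ℝ × ℝ => (1 : ℝ)) (0 : ℝ × ℝ →L[ℝ] ℝ) p :=
    hasFDerivAt_const _ _
  have dsum' := dconst.congr_of_eventuallyEq
    (Filter.eventually_of_mem hn (fun q hq => hsq q hq))
  have h0 := congrArg (fun L => L w) (dsum.unique dsum')
  have h1 := hsq p hp
  simp at h0
  rw [dξ] at henv
  simp [dot3] at henv ⊢
  linear_combination henv + (R p / 2) * h0 + (fderiv ℝ R p w) * h1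

theorem cross_sq (a b : Fin 3 → ℝ) :
    dot3 (cross3 a b) (cross3 a b) = dot3 a a * dot3 b b - dot3 a b ^ 2 := by
  simp [dot3, cross3]; ring

theorem triple_sq (n a b : Fin 3 → ℝ) :
    dot3 n (cross3 a b) ^ 2 = dot3 n n * (dot3 a a * dot3 b b - dot3 a b ^ 2)
      - dot3 n a * (dot3 n a * dot3 b b - dot3 a b * dot3 n b)
      + dot3 n b * (dot3 n a * dot3 a b - dot3 a a * dot3 n b) := by
  simp [dot3, cross3]; ring

theorem dot3_smul' (n a : Fin 3 → ℝ) (c : ℝ) : dot3 n (c • a) = c * dot3 n a := by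
  simp [dot3]; ring

/-- (Beltrami) For isometric surfaces `X`, `X̃` and congruences of spheres `[X,R]`, `[X̃,R]`
with the same radius function and envelopes chosen with the same sign, the angles between
the unit vector `ν` (resp. `ν̃`) and `X_u`, `X_v`, `N` (resp. `X̃_u`, `X̃_v`, `Ñ`) coincide. -/
theorem statement2 (Ω : Set (ℝ × ℝ)) (hΩ : IsOpen Ω)
    (X Xt ν νt : ℝ × ℝ → Fin 3 → ℝ) (R : ℝ × ℝ → ℝ)
    (hX : ContDiffOn ℝ (⊤ : ℕ∞) X Ω) (hXt : ContDiffOn ℝ (⊤ : ℕ∞) Xt Ω)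
    (hR : ContDiffOn ℝ (⊤ : ℕ∞) R Ω)
    (hν : ContDiffOn ℝ (⊤ : ℕ∞) ν Ω) (hνt : ContDiffOn ℝ (⊤ : ℕ∞) νt Ω)
    (himm : ∀ p ∈ Ω, LinearIndependent ℝ ![fderiv ℝ X p (1, 0), fderiv ℝ X p (0, 1)])
    (himmt : ∀ p ∈ Ω, LinearIndependent ℝ ![fderiv ℝ Xt p (1, 0), fderiv ℝ Xt p (0, 1)])
    -- the first fundamental forms of `X` and `X̃` coincide pointwise
    (hiso : ∀ p ∈ Ω,
      dot3 (fderiv ℝ X p (1, 0)) (fderiv ℝ X p (1, 0)) =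
        dot3 (fderiv ℝ Xt p (1, 0)) (fderiv ℝ Xt p (1, 0)) ∧
      dot3 (fderiv ℝ X p (1, 0)) (fderiv ℝ X p (0, 1)) =
        dot3 (fderiv ℝ Xt p (1, 0)) (fderiv ℝ Xt p (0, 1)) ∧
      dot3 (fderiv ℝ X p (0, 1)) (fderiv ℝ X p (0, 1)) =
        dot3 (fderiv ℝ Xt p (0, 1)) (fderiv ℝ Xt p (0, 1)))
    (hunit : ∀ p ∈ Ω, norm3 (ν p) = 1) (hunitt : ∀ p ∈ Ω, norm3 (νt p) = 1)
    (ξ ξt : ℝ × ℝ → Fin 3 → ℝ)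
    (hξ : ∀ p, ξ p = X p - R p • ν p)
    (hξt : ∀ p, ξt p = Xt p - R p • νt p)
    (henv : ∀ p ∈ Ω, dot3 (ν p) (fderiv ℝ ξ p (1, 0)) = 0 ∧
                     dot3 (ν p) (fderiv ℝ ξ p (0, 1)) = 0)
    (henvt : ∀ p ∈ Ω, dot3 (νt p) (fderiv ℝ ξt p (1, 0)) = 0 ∧
                      dot3 (νt p) (fderiv ℝ ξt p (0, 1)) = 0)
    -- both envelopes are chosen with the same (positive) sign
    (hsign : ∀ p ∈ Ω,
      0 ≤ dot3 (ν p) ((norm3 (cross3 (fderiv ℝ X p (1, 0)) (fderiv ℝ X p (0, 1))))⁻¹ •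
            cross3 (fderiv ℝ X p (1, 0)) (fderiv ℝ X p (0, 1))) ∧
      0 ≤ dot3 (νt p) ((norm3 (cross3 (fderiv ℝ Xt p (1, 0)) (fderiv ℝ Xt p (0, 1))))⁻¹ •
            cross3 (fderiv ℝ Xt p (1, 0)) (fderiv ℝ Xt p (0, 1)))) :
    ∀ p ∈ Ω,
      let Xu := fderiv ℝ X p (1, 0)
      let Xv := fderiv ℝ X p (0, 1)
      let N := (norm3 (cross3 Xu Xv))⁻¹ • cross3 Xu Xv
      let Xtu := fderiv ℝ Xt p (1, 0)
      let Xtv := fderiv ℝ Xt p (0, 1)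
      let Nt := (norm3 (cross3 Xtu Xtv))⁻¹ • cross3 Xtu Xtv
      dot3 (ν p) Xu / norm3 Xu = dot3 (νt p) Xtu / norm3 Xtu ∧
      dot3 (ν p) Xv / norm3 Xv = dot3 (νt p) Xtv / norm3 Xtv ∧
      dot3 (ν p) N = dot3 (νt p) Nt := by
  intro p hp
  obtain ⟨hE, hF, hG⟩ := hiso p hp
  obtain ⟨s1, s2⟩ := hsign p hp
  have a1 := key_tangent hΩ hX hR hν hunit hξ hp (1, 0) (henv p hp).1
  have a2 := key_tangent hΩ hX hR hν hunit hξ hp (0, 1) (henv p hp).2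
  have b1 := key_tangent hΩ hXt hR hνt hunitt hξt hp (1, 0) (henvt p hp).1
  have b2 := key_tangent hΩ hXt hR hνt hunitt hξt hp (0, 1) (henvt p hp).2
  have n1 : dot3 (ν p) (ν p) = 1 := by
    have h := hunit p hp
    unfold norm3 at h
    rwa [Real.sqrt_eq_one] at h
  have n2 : dot3 (νt p) (νt p) = 1 := by
    have h := hunitt p hp
    unfold norm3 at h
    rwa [Real.sqrt_eq_one] at h
  refine ⟨?_, ?_, ?_⟩
  · rw [a1, b1]; unfold norm3; rw [hE]
  · rw [a2, b2]; unfold norm3; rw [hG]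
  · refine (sq_eq_sq₀ s1 s2).1 ?_
    rw [dot3_smul', dot3_smul', mul_pow, mul_pow, triple_sq, triple_sq]
    unfold norm3
    rw [cross_sq, cross_sq, a1, a2, b1, b2, n1, n2, hE, hF, hG]
end
end

section
/- (The plus envelope is planar) Let Ω ⊆ ℂ be open, f = f₁ + i f₂ holomorphic on Ω with f′ ≠ 0 on Ω, R : Ω → ℝ smooth and positive, and X(τ) = (f₁, f₂, R). Let N = (X_u × X_v)/‖X_u × X_v‖, let Δ(X,R) and Δ₁R be defined from the first fundamental form of X as usual, and define the envelope ξ₊ = X − R(Δ(X,R) + √(1−Δ₁R)·N). Then ξ₊(τ) = (f₁(τ), f₂(τ), 0) for every τ ∈ Ω; that is, ξ₊ is contained in the plane {z = 0}. -/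
noncomputable section

open Complex

lemma sqrt_ratio_aux (m s : ℝ) (hm : 0 < m) (hs : 0 ≤ s) :
    Real.sqrt (m / (m + s)) * (Real.sqrt (m * (m + s)))⁻¹ = 1 / (m + s) := by
  have h1 : 0 < m + s := by linarith
  rw [Real.sqrt_div hm.le, Real.sqrt_mul hm.le]
  have h2 : Real.sqrt m ≠ 0 := (Real.sqrt_pos.2 hm).ne'
  have h3 : Real.sqrt (m + s) ≠ 0 := (Real.sqrt_pos.2 h1).ne'
  have h4 := Real.mul_self_sqrt h1.le
  have h5 : 1 / (m + s) = 1 / (Real.sqrt (m + s) * Real.sqrt (m + s)) := by rw [h4]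
  rw [mul_inv, h5]
  field_simp

/-- (The plus envelope is planar) For the congruence of spheres with surface of centers
`X = (f₁, f₂, R)` (`f` holomorphic, `f′ ≠ 0`, `R > 0` smooth), the envelope
`ξ₊ = X − R(Δ(X,R) + √(1−Δ₁R)·N)` is `(f₁, f₂, 0)`, contained in the plane `{z = 0}`. -/
theorem statement9 (Ω : Set ℂ) (hΩ : IsOpen Ω) (f : ℂ → ℂ) (R : ℂ → ℝ)
    (hf : DifferentiableOn ℂ f Ω) (hf' : ∀ τ ∈ Ω, deriv f τ ≠ 0)
    (hR : ContDiffOn ℝ (⊤ : ℕ∞) R Ω) (hRpos : ∀ τ ∈ Ω, 0 < R τ)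
    (X : ℂ → Fin 3 → ℝ) (hX : ∀ σ, X σ = ![(f σ).re, (f σ).im, R σ])
    (A : ℂ → Matrix (Fin 2) (Fin 2) ℝ)
    (hA : ∀ τ ∈ Ω,
      A τ * !![dot3 (fderiv ℝ X τ 1) (fderiv ℝ X τ 1),
               dot3 (fderiv ℝ X τ 1) (fderiv ℝ X τ Complex.I);
               dot3 (fderiv ℝ X τ 1) (fderiv ℝ X τ Complex.I),
               dot3 (fderiv ℝ X τ Complex.I) (fderiv ℝ X τ Complex.I)] = 1) :
    ∀ τ ∈ Ω,
      let Xu := fderiv ℝ X τ 1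
      let Xv := fderiv ℝ X τ Complex.I
      let N := (norm3 (cross3 Xu Xv))⁻¹ • cross3 Xu Xv
      let Ru := fderiv ℝ R τ 1
      let Rv := fderiv ℝ R τ Complex.I
      let ΔXR := (Ru * A τ 0 0 + Rv * A τ 0 1) • Xu + (Ru * A τ 1 0 + Rv * A τ 1 1) • Xv
      let Δ₁R := Ru ^ 2 * A τ 0 0 + 2 * Ru * Rv * A τ 0 1 + Rv ^ 2 * A τ 1 1
      X τ - R τ • (ΔXR + Real.sqrt (1 - Δ₁R) • N) = ![(f τ).re, (f τ).im, 0] := by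
  intro τ hτ
  have hfd : DifferentiableAt ℂ f τ := hf.differentiableAt (hΩ.mem_nhds hτ)
  have hRd : DifferentiableAt ℝ R τ :=
    (hR.contDiffAt (hΩ.mem_nhds hτ)).differentiableAt (by simp)
  have hF : HasFDerivAt f ((fderiv ℂ f τ).restrictScalars ℝ) τ :=
    hfd.hasFDerivAt.restrictScalars ℝ
  have hval : ∀ w, fderiv ℂ f τ w = w * deriv f τ := by
    intro w
    simp [fderiv_eq_smul_deriv]
  have hD : ∀ w, fderiv ℝ X τ w =
      ![(w * deriv f τ).re, (w * deriv f τ).im, fderiv ℝ R τ w] := by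
    intro w
    have hre := Complex.reCLM.hasFDerivAt.comp τ hF
    have him := Complex.imCLM.hasFDerivAt.comp τ hF
    have hc : HasFDerivAt X (ContinuousLinearMap.pi
        ![Complex.reCLM.comp ((fderiv ℂ f τ).restrictScalars ℝ),
          Complex.imCLM.comp ((fderiv ℂ f τ).restrictScalars ℝ), fderiv ℝ R τ]) τ := by
      rw [funext hX]
      rw [hasFDerivAt_pi']
      intro i
      fin_cases i
      · exact hre
      · exact him
      · exact hRd.hasFDerivAt
    rw [hc.fderiv]
    ext i
    fin_cases i <;> simp [hval]
  have hA' := hA τ hτ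
  have hne := hf' τ hτ
  simp only [hX τ]
  rw [hD 1, hD Complex.I] at hA' ⊢
  generalize fderiv ℝ R τ 1 = a at *
  generalize fderiv ℝ R τ Complex.I = b at *
  have hm : 0 < (deriv f τ).re ^ 2 + (deriv f τ).im ^ 2 := by
    have := Complex.normSq_pos.2 hne
    rw [Complex.normSq_apply] at this
    nlinarith
  simp only [one_mul, Complex.I_mul_re, Complex.I_mul_im] at hA' ⊢
  generalize (deriv f τ).re = p at *
  generalize (deriv f τ).im = q at *
  have e00 := congrFun (congrFun hA' 0) 0
  have e01 := congrFun (congrFun hA' 0) 1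
  have e10 := congrFun (congrFun hA' 1) 0
  have e11 := congrFun (congrFun hA' 1) 1
  simp [Matrix.mul_apply, Fin.sum_univ_two, dot3] at e00 e01 e10 e11
  generalize A τ 0 0 = A00 at *
  generalize A τ 0 1 = A01 at *
  generalize A τ 1 0 = A10 at *
  generalize A τ 1 1 = A11 at *
  obtain ⟨m, hmd⟩ : ∃ m, m = p ^ 2 + q ^ 2 := ⟨_, rfl⟩
  obtain ⟨s, hsd⟩ : ∃ s, s = a ^ 2 + b ^ 2 := ⟨_, rfl⟩
  rw [← hmd] at hm
  have hs : 0 ≤ s := by rw [hsd]; positivity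
  have hms : 0 < m + s := by linarith
  have hdet : m * (m + s) ≠ 0 := by positivity
  have f00 : A00 = (m + b ^ 2) / (m * (m + s)) := by
    rw [eq_div_iff hdet]; subst hmd hsd
    linear_combination (p ^ 2 + q ^ 2 + b ^ 2) * e00 - a * b * e01
  have f01 : A01 = (- (a * b)) / (m * (m + s)) := by
    rw [eq_div_iff hdet]; subst hmd hsd
    linear_combination (p ^ 2 + q ^ 2 + a ^ 2) * e01 - a * b * e00
  have f10 : A10 = (- (a * b)) / (m * (m + s)) := by
    rw [eq_div_iff hdet]; subst hmd hsd
    linear_combination (p ^ 2 + q ^ 2 + b ^ 2) * e10 - a * b * e11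
  have f11 : A11 = (m + a ^ 2) / (m * (m + s)) := by
    rw [eq_div_iff hdet]; subst hmd hsd
    linear_combination (p ^ 2 + q ^ 2 + a ^ 2) * e11 - a * b * e10
  have c1 : a * A00 + b * A01 = a / (m + s) := by
    rw [f00, f01]; field_simp; ring
  have c2 : a * A10 + b * A11 = b / (m + s) := by
    rw [f10, f11]; field_simp; ring
  have c3 : 1 - (a ^ 2 * A00 + 2 * a * b * A01 + b ^ 2 * A11) = m / (m + s) := by
    rw [f00, f01, f11]; field_simp; rw [hsd]; ring
  have c4 : norm3 (cross3 ![p, q, a] ![-q, p, b]) = Real.sqrt (m * (m + s)) := by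
    unfold norm3
    congr 1
    simp [dot3, cross3, hmd, hsd]
    ring
  rw [c1, c2, c3, c4, smul_smul, sqrt_ratio_aux m s hm hs]
  ext i
  fin_cases i
  · simp [cross3]; right; field_simp; ring
  · simp [cross3]; right; field_simp; ring
  · simp [cross3]
    have : a / (m + s) * a + b / (m + s) * b + (m + s)⁻¹ * (p * p + q * q) = 1 := by
      field_simp; rw [hmd, hsd]; ring
    rw [this]; ring
end
end
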